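/- Let X^m and Y^m be jointly distributed random variables taking values in finite sets and let 0 ≤ k ≤ m. Then the k-step delayed directed information equals the sum of the InfoMat entries lying at least k above the main diagonal: I(D^k ∘ X^m → Y^m) = Σ_{(i,j): j ≥ i + k, 1 ≤ i, j ≤ m} I(X_i; Y_j | X^{i-1}, Y^{j-1}). -/

import Mathlib

open MeasureTheory Finset

variable {Ω : Type*} [MeasurableSpace Ω]

/-- Shannon entropy of a random variable `W` with values in a finite set:
`H(W) = -∑ w, P(W = w) log P(W = w)`. -/
noncomputable def entropy (μ : Measure Ω) {α : Type*} [Fintype α] (W : Ω → α) : ℝ :=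
  -∑ w : α, (μ (W ⁻¹' {w})).toReal * Real.log (μ (W ⁻¹' {w})).toReal

/-- Conditional entropy `H(W | V) = H(W, V) - H(V)`. -/
noncomputable def condEntropy (μ : Measure Ω) {α β : Type*} [Fintype α] [Fintype β]
    (W : Ω → α) (V : Ω → β) : ℝ :=
  entropy μ (fun ω => (W ω, V ω)) - entropy μ V

/-- Conditional mutual information `I(A; B | C) = H(A|C) + H(B|C) - H(A,B|C)`. -/
noncomputable def condMI (μ : Measure Ω) {α β γ : Type*} [Fintype α] [Fintype β] [Fintype γ]
    (A : Ω → α) (B : Ω → β) (C : Ω → γ) : ℝ :=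
  condEntropy μ A C + condEntropy μ B C - condEntropy μ (fun ω => (A ω, B ω)) C

/-- Mutual information `I(A; B) = H(A) + H(B) - H(A,B)`. -/
noncomputable def mutualInfo (μ : Measure Ω) {α β : Type*} [Fintype α] [Fintype β]
    (A : Ω → α) (B : Ω → β) : ℝ :=
  entropy μ A + entropy μ B - entropy μ (fun ω => (A ω, B ω))

/-- The prefix `X^i = (X_1, …, X_i)` of the sequence `X` (1-based indexing);
`X^0` is the empty (constant) random variable. -/
def pref {𝒳 : Type*} (X : ℕ → Ω → 𝒳) (i : ℕ) : Ω → (Fin i → 𝒳) :=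
  fun ω t => X (t.1 + 1) ω

/-- The InfoMat entry `I_{i,j} = I(X_i; Y_j | X^{i-1}, Y^{j-1})`. -/
noncomputable def infoMat (μ : Measure Ω) {𝒳 𝒴 : Type*} [Fintype 𝒳] [Fintype 𝒴]
    (X : ℕ → Ω → 𝒳) (Y : ℕ → Ω → 𝒴) (i j : ℕ) : ℝ :=
  condMI μ (X i) (Y j) (fun ω => (pref X (i - 1) ω, pref Y (j - 1) ω))

/-- Directed information `I(X^m → Y^m) = ∑_{i=1}^m I(X^i; Y_i | Y^{i-1})`. -/
noncomputable def directedInfo (μ : Measure Ω) {𝒳 𝒴 : Type*} [Fintype 𝒳] [Fintype 𝒴]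
    (m : ℕ) (X : ℕ → Ω → 𝒳) (Y : ℕ → Ω → 𝒴) : ℝ :=
  ∑ i ∈ Finset.Icc 1 m, condMI μ (pref X i) (Y i) (pref Y (i - 1))

/-- `k`-step delayed directed information
`I(D^k ∘ X^m → Y^m) = ∑_{i=k+1}^m I(X^{i-k}; Y_i | Y^{i-1})`. -/
noncomputable def delayedDI (μ : Measure Ω) {𝒳 𝒴 : Type*} [Fintype 𝒳] [Fintype 𝒴]
    (m k : ℕ) (X : ℕ → Ω → 𝒳) (Y : ℕ → Ω → 𝒴) : ℝ :=
  ∑ i ∈ Finset.Icc (k + 1) m, condMI μ (pref X (i - k)) (Y i) (pref Y (i - 1))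

/-- Instantaneous information `I_inst(X^m, Y^m) = ∑_{i=1}^m I(X_i; Y_i | X^{i-1}, Y^{i-1})`. -/
noncomputable def instInfo (μ : Measure Ω) {𝒳 𝒴 : Type*} [Fintype 𝒳] [Fintype 𝒴]
    (m : ℕ) (X : ℕ → Ω → 𝒳) (Y : ℕ → Ω → 𝒴) : ℝ :=
  ∑ i ∈ Finset.Icc 1 m, infoMat μ X Y i i

variable {𝒳 𝒴 : Type*} [Fintype 𝒳] [MeasurableSpace 𝒳] [MeasurableSingletonClass 𝒳]
  [Fintype 𝒴] [MeasurableSpace 𝒴] [MeasurableSingletonClass 𝒴]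

/-!
Entropy depends on a random variable only through its level sets, so it is unchanged by an injective
relabelling of values. This makes the chain rule `I(A, D; B | C) = I(A; B | C) + I(D; B | A, C)` a
cancellation of joint entropies, and peeling off the last letter of `X^{j-k}` repeatedly turns the
`j`-th summand of the delayed directed information into the part of column `j` of the InfoMat
with `i ≤ j - k`. Summing by rows instead of columns gives the theorem.
-/

section ConditionalMutualInformation

variable (μ : Measure Ω) {α β γ δ : Type*} [Fintype α] [Fintype β] [Fintype γ] [Fintype δ]

theorem entropy_comp_of_injective {f : α → β} (hf : Function.Injective f) (W : Ω → α) :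
    entropy μ (fun ω => f (W ω)) = entropy μ W := by
  have level_set_of_apply (w : α) : (fun ω => f (W ω)) ⁻¹' {f w} = W ⁻¹' {w} := by
    ext ω
    exact hf.eq_iff
  have level_set_of_notMem_range (v : β) (hv : v ∉ Set.range f) :
      (fun ω => f (W ω)) ⁻¹' {v} = ∅ :=
    Set.eq_empty_of_forall_notMem fun ω hω => hv ⟨W ω, hω⟩
  refine congrArg Neg.neg (Fintype.sum_of_injective f hf _ _ (fun v hv => ?_) fun w => ?_).symm
  · simp [level_set_of_notMem_range v hv]
  · rw [level_set_of_apply]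

theorem condMI_eq_entropy (A : Ω → α) (B : Ω → β) (C : Ω → γ) :
    condMI μ A B C = entropy μ (fun ω => (A ω, C ω)) + entropy μ (fun ω => (B ω, C ω))
      - entropy μ (fun ω => ((A ω, B ω), C ω)) - entropy μ C := by
  unfold condMI condEntropy
  ring

theorem condMI_comp_left_of_injective {f : α → δ} (hf : Function.Injective f)
    (A : Ω → α) (B : Ω → β) (C : Ω → γ) :
    condMI μ (fun ω => f (A ω)) B C = condMI μ A B C := by
  have entropy_pair : entropy μ (fun ω => (f (A ω), C ω)) = entropy μ (fun ω => (A ω, C ω)) :=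
    entropy_comp_of_injective μ (hf.prodMap Function.injective_id) fun ω => (A ω, C ω)
  have entropy_triple : entropy μ (fun ω => ((f (A ω), B ω), C ω))
      = entropy μ (fun ω => ((A ω, B ω), C ω)) :=
    entropy_comp_of_injective μ
      ((hf.prodMap Function.injective_id).prodMap Function.injective_id)
      fun ω => ((A ω, B ω), C ω)
  rw [condMI_eq_entropy, condMI_eq_entropy, entropy_pair, entropy_triple]

theorem condMI_eq_zero_of_subsingleton_left [Subsingleton α]
    (A : Ω → α) (B : Ω → β) (C : Ω → γ) : condMI μ A B C = 0 := by
  have entropy_pair : entropy μ C = entropy μ (fun ω => (A ω, C ω)) :=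
    entropy_comp_of_injective μ Prod.snd_injective fun ω => (A ω, C ω)
  have entropy_triple : entropy μ (fun ω => (B ω, C ω)) = entropy μ (fun ω => ((A ω, B ω), C ω)) :=
    entropy_comp_of_injective μ (Prod.snd_injective.prodMap Function.injective_id)
      fun ω => ((A ω, B ω), C ω)
  rw [condMI_eq_entropy, ← entropy_pair, ← entropy_triple]
  ring

theorem condMI_prodMk_left (A : Ω → α) (D : Ω → δ) (B : Ω → β) (C : Ω → γ) :
    condMI μ (fun ω => (A ω, D ω)) B C
      = condMI μ A B C + condMI μ D B (fun ω => (A ω, C ω)) := by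
  have entropy_DAC : entropy μ (fun ω => (D ω, (A ω, C ω)))
      = entropy μ (fun ω => ((A ω, D ω), C ω)) :=
    entropy_comp_of_injective μ
      (((Equiv.prodComm α δ).prodCongr (Equiv.refl γ)).trans (Equiv.prodAssoc δ α γ)).injective
      fun ω => ((A ω, D ω), C ω)
  have entropy_BAC : entropy μ (fun ω => (B ω, (A ω, C ω)))
      = entropy μ (fun ω => ((A ω, B ω), C ω)) :=
    entropy_comp_of_injective μ
      (((Equiv.prodComm α β).prodCongr (Equiv.refl γ)).trans (Equiv.prodAssoc β α γ)).injective
      fun ω => ((A ω, B ω), C ω)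
  have entropy_DBAC : entropy μ (fun ω => ((D ω, B ω), (A ω, C ω)))
      = entropy μ (fun ω => (((A ω, D ω), B ω), C ω)) :=
    entropy_comp_of_injective μ (f := fun p : ((α × δ) × β) × γ =>
        ((p.1.1.2, p.1.2), (p.1.1.1, p.2)))
      (by rintro ⟨⟨⟨_, _⟩, _⟩, _⟩ ⟨⟨⟨_, _⟩, _⟩, _⟩ h; simp_all)
      fun ω => (((A ω, D ω), B ω), C ω)
  simp only [condMI_eq_entropy, entropy_DAC, entropy_BAC, entropy_DBAC]
  ring

end ConditionalMutualInformation

section DelayedDirectedInformation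

variable {α β γ : Type*}

theorem pref_succ {Ω : Type*} (X : ℕ → Ω → α) (n : ℕ) :
    pref X (n + 1) = fun ω => Fin.snoc (α := fun _ => α) (pref X n ω) (X (n + 1) ω) := by
  ext ω t
  refine Fin.lastCases ?_ (fun s => ?_) t <;> simp [pref]

variable (μ : Measure Ω) [Fintype α] [Fintype β] [Fintype γ]

theorem condMI_pref_succ (X : ℕ → Ω → α) (B : Ω → β) (C : Ω → γ) (n : ℕ) :
    condMI μ (pref X (n + 1)) B C
      = condMI μ (pref X n) B C + condMI μ (X (n + 1)) B (fun ω => (pref X n ω, C ω)) := by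
  rw [pref_succ, ← condMI_prodMk_left]
  exact condMI_comp_left_of_injective μ
    (Fin.snoc_injective2 (α := fun _ => α)).uncurry (fun ω => (pref X n ω, X (n + 1) ω)) B C

theorem condMI_pref_eq_sum (X : ℕ → Ω → α) (B : Ω → β) (C : Ω → γ) (n : ℕ) :
    condMI μ (pref X n) B C
      = ∑ i ∈ Icc 1 n, condMI μ (X i) B (fun ω => (pref X (i - 1) ω, C ω)) := by
  induction n with
  | zero => simp [condMI_eq_zero_of_subsingleton_left]
  | succ n ih =>
    rw [condMI_pref_succ, ih, sum_Icc_succ_top (Nat.le_add_left 1 n), Nat.add_sub_cancel]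

theorem condMI_pref_eq_sum_infoMat (X : ℕ → Ω → α) (Y : ℕ → Ω → β) (n j : ℕ) :
    condMI μ (pref X n) (Y j) (pref Y (j - 1)) = ∑ i ∈ Icc 1 n, infoMat μ X Y i j :=
  condMI_pref_eq_sum μ X (Y j) (pref Y (j - 1)) n

theorem delayedDI_eq_sum_upper_infoMat_general (m k : ℕ) (X : ℕ → Ω → α) (Y : ℕ → Ω → β) :
    delayedDI μ m k X Y = ∑ i ∈ Icc 1 m, ∑ j ∈ Icc (i + k) m, infoMat μ X Y i j :=
  calc delayedDI μ m k X Y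
      = ∑ j ∈ Icc (k + 1) m, ∑ i ∈ Icc 1 (j - k), infoMat μ X Y i j :=
        sum_congr rfl fun j _ => condMI_pref_eq_sum_infoMat μ X Y (j - k) j
    _ = ∑ i ∈ Icc 1 m, ∑ j ∈ Icc (i + k) m, infoMat μ X Y i j :=
        sum_comm' fun j i => by
          simp only [mem_Icc]
          omega

end DelayedDirectedInformation

/-- For `0 ≤ k ≤ m`, the `k`-step delayed directed information is the sum of
the InfoMat entries lying at least `k` above the main diagonal:
`I(D^k ∘ X^m → Y^m) = ∑_{(i,j) : j ≥ i + k, 1 ≤ i, j ≤ m} I(X_i; Y_j | X^{i-1}, Y^{j-1})`. -/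
theorem delayedDI_eq_sum_upper_infoMat (μ : Measure Ω) [IsProbabilityMeasure μ]
    (m k : ℕ) (hk : k ≤ m) (X : ℕ → Ω → 𝒳) (Y : ℕ → Ω → 𝒴)
    (hX : ∀ i, Measurable (X i)) (hY : ∀ j, Measurable (Y j)) :
    delayedDI μ m k X Y
      = ∑ i ∈ Finset.Icc 1 m, ∑ j ∈ Finset.Icc (i + k) m, infoMat μ X Y i j :=
  delayedDI_eq_sum_upper_infoMat_general μ m k X Y
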